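/- There exist T > 0 and an infinitely differentiable function f : ℝ → ℝ such that f(t) = e^{-t} for all t ≤ -T, f(t) = 1 + e^{-t} for all t ≥ 0, and for every t ∈ ℝ the four conditions hold: (a) f(t) > 1; (b) f'(t) < 0; (c) f''(t) > 0; (d) 1 - f(t)·f'(t) > (1 + f'(t)/f(t))². -/

import Mathlib

/-!
The interpolation is `f t = e⁻ᵗ + s t`, where `s` is a smooth step from `0` on `(-∞, -T]` to `1` on
`[0, ∞)`. Stretching a fixed step by a large factor `T` makes `|s'|` and `|s''|` smaller than `1`.
They vanish for `t > 0`, while `1 ≤ e⁻ᵗ` for `t ≤ 0`, so both are smaller than `e⁻ᵗ` everywhere, and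
`f' = -e⁻ᵗ + s'` and `f'' = e⁻ᵗ + s''` keep the signs they have for `s = 0`. Moreover
`0 < -f' < 2 e⁻ᵗ ≤ 2 f`, which gives `(1 + f' / f)² < 1 < 1 - f f'`.
-/

open Filter Set Topology

section IteratedDeriv

variable {𝕜 E : Type*} [NontriviallyNormedField 𝕜] [NormedAddCommGroup E] [NormedSpace 𝕜 E]

theorem eqOn_iteratedDeriv_zero_of_eqOn_const {f : 𝕜 → E} {U : Set 𝕜} {c : E} {k : ℕ}
    (hU : IsOpen U) (hf : EqOn f (fun _ ↦ c) U) (hk : k ≠ 0) : EqOn (iteratedDeriv k f) 0 U :=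
  fun x hx ↦ by simpa [iteratedDeriv_const, hk] using hf.iteratedDeriv_of_isOpen hU k hx

theorem iteratedDeriv_comp_const_add_div {f : 𝕜 → E} {k : ℕ} (hf : ContDiff 𝕜 k f) (a T t : 𝕜) :
    iteratedDeriv k (fun x ↦ f (a + x / T)) t = T⁻¹ ^ k • iteratedDeriv k f (a + t / T) := by
  have hshift : ContDiff 𝕜 k fun x ↦ f (a + x) := hf.comp (contDiff_const.add contDiff_id)
  simpa [iteratedDeriv_comp_const_add, div_eq_inv_mul] using
    congrFun (iteratedDeriv_comp_const_smul hshift T⁻¹) t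

end IteratedDeriv

theorem eventually_norm_iteratedDeriv_comp_const_add_div_lt {E : Type*} [NormedAddCommGroup E]
    [NormedSpace ℝ E] {f : ℝ → E} {k : ℕ} {C ε : ℝ} (hf : ContDiff ℝ k f) (hk : k ≠ 0)
    (hC : ∀ x, ‖iteratedDeriv k f x‖ ≤ C) (hε : 0 < ε) (a : ℝ) :
    ∀ᶠ T in atTop, ∀ t, ‖iteratedDeriv k (fun x ↦ f (a + x / T)) t‖ < ε := by
  have hlim : Tendsto (fun T : ℝ ↦ T⁻¹ ^ k * C) atTop (𝓝 0) := by
    simpa [hk] using (tendsto_inv_atTop_zero.pow k).mul_const C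
  filter_upwards [hlim.eventually_lt_const hε, eventually_ge_atTop 0] with T hT hT₀ t
  calc ‖iteratedDeriv k (fun x ↦ f (a + x / T)) t‖
      = T⁻¹ ^ k * ‖iteratedDeriv k f (a + t / T)‖ := by
        rw [iteratedDeriv_comp_const_add_div hf, norm_smul, norm_pow, norm_inv,
          Real.norm_of_nonneg hT₀]
    _ ≤ T⁻¹ ^ k * C := by gcongr; exact hC _
    _ < ε := hT

theorem hasCompactSupport_iteratedDeriv_smoothTransition {k : ℕ} (hk : k ≠ 0) :
    HasCompactSupport (iteratedDeriv k Real.smoothTransition) := by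
  have hleft : EqOn (iteratedDeriv k Real.smoothTransition) 0 (Iio 0) :=
    eqOn_iteratedDeriv_zero_of_eqOn_const isOpen_Iio
      (fun _ hx ↦ Real.smoothTransition.zero_of_nonpos (le_of_lt hx)) hk
  have hright : EqOn (iteratedDeriv k Real.smoothTransition) 0 (Ioi 1) :=
    eqOn_iteratedDeriv_zero_of_eqOn_const isOpen_Ioi
      (fun _ hx ↦ Real.smoothTransition.one_of_one_le (le_of_lt hx)) hk
  refine HasCompactSupport.intro (isCompact_Icc (a := 0) (b := 1)) fun x hx ↦ ?_
  rcases lt_or_ge x 0 with hx₀ | hx₀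
  · exact hleft hx₀
  · exact hright (lt_of_not_ge fun hx₁ ↦ hx ⟨hx₀, hx₁⟩)

/-- The smooth step rising from `0` on `(-∞, -T]` to `1` on `[0, ∞)`, obtained by stretching
`Real.smoothTransition` horizontally by the factor `T`. It is only meaningful for `0 < T`. -/
noncomputable def slowTransition (T t : ℝ) : ℝ :=
  Real.smoothTransition (1 + t / T)

namespace slowTransition

variable {T t : ℝ}

protected theorem contDiff {n : ℕ∞} : ContDiff ℝ n (slowTransition T) :=
  Real.smoothTransition.contDiff.comp (contDiff_const.add (contDiff_id.div_const T))

theorem nonneg : 0 ≤ slowTransition T t :=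
  Real.smoothTransition.nonneg _

theorem eq_zero_of_le_neg (hT : 0 < T) (ht : t ≤ -T) : slowTransition T t = 0 := by
  have : t / T ≤ -1 := by rwa [div_le_iff₀ hT, neg_one_mul]
  exact Real.smoothTransition.zero_of_nonpos (by linarith)

theorem eq_one_of_nonneg (hT : 0 < T) (ht : 0 ≤ t) : slowTransition T t = 1 :=
  Real.smoothTransition.one_of_one_le (le_add_of_nonneg_right (by positivity))

theorem eventually_abs_iteratedDeriv_lt {k : ℕ} {ε : ℝ} (hk : k ≠ 0) (hε : 0 < ε) :
    ∀ᶠ T in atTop, ∀ t, |iteratedDeriv k (slowTransition T) t| < ε := by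
  have hsmooth : ContDiff ℝ k Real.smoothTransition := Real.smoothTransition.contDiff (n := k)
  obtain ⟨C, hC⟩ := (hasCompactSupport_iteratedDeriv_smoothTransition hk).exists_bound_of_continuous
    (hsmooth.continuous_iteratedDeriv k le_rfl)
  exact eventually_norm_iteratedDeriv_comp_const_add_div_lt hsmooth hk hC hε 1

theorem abs_iteratedDeriv_lt_exp_neg {k : ℕ} (hT : 0 < T) (hk : k ≠ 0)
    (hlt : |iteratedDeriv k (slowTransition T) t| < 1) :
    |iteratedDeriv k (slowTransition T) t| < Real.exp (-t) := by
  rcases le_or_gt t 0 with ht | ht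
  · exact hlt.trans_le (Real.one_le_exp (neg_nonneg.2 ht))
  · have hzero : iteratedDeriv k (slowTransition T) t = 0 :=
      eqOn_iteratedDeriv_zero_of_eqOn_const isOpen_Ioi
        (fun _ hx ↦ eq_one_of_nonneg hT (le_of_lt hx)) hk ht
    simpa [hzero] using Real.exp_pos (-t)

theorem one_lt_exp_neg_add (hT : 0 < T) : 1 < Real.exp (-t) + slowTransition T t := by
  rcases lt_or_ge t 0 with ht | ht
  · exact lt_add_of_lt_of_nonneg (Real.one_lt_exp_iff.2 (neg_pos.2 ht)) nonneg
  · rw [eq_one_of_nonneg hT ht]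
    exact lt_add_of_pos_left 1 (Real.exp_pos _)

end slowTransition

theorem iteratedDeriv_exp_neg_add {s : ℝ → ℝ} {k : ℕ} (hs : ContDiff ℝ k s) (t : ℝ) :
    iteratedDeriv k (fun x ↦ Real.exp (-x) + s x) t =
      (-1) ^ k * Real.exp (-t) + iteratedDeriv k s t := by
  have hexp : iteratedDeriv k (fun x ↦ Real.exp (-x)) t = (-1) ^ k * Real.exp (-t) := by
    simpa using congrFun (iteratedDeriv_exp_const_mul k (-1)) t
  rw [iteratedDeriv_fun_add (by fun_prop) hs.contDiffAt, hexp]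

theorem sq_one_add_div_lt_one_sub_mul {K : Type*} [Field K] [LinearOrder K] [IsStrictOrderedRing K]
    {y y' : K} (hy : 0 < y) (hy' : y' < 0) (hle : -y' ≤ 2 * y) :
    (1 + y' / y) ^ 2 < 1 - y * y' := by
  have hdiv_lower : -2 ≤ y' / y := by rw [le_div_iff₀ hy]; linarith
  have hdiv_neg : y' / y < 0 := div_neg_of_neg_of_pos hy' hy
  calc (1 + y' / y) ^ 2 ≤ 1 := (sq_le_one_iff_abs_le_one _).2 (abs_le.2 ⟨by linarith, by linarith⟩)
    _ < 1 - y * y' := by linarith [mul_neg_of_pos_of_neg hy hy']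

/-- There is a smooth interpolation `f` between `e^{-t}` (for `t ≤ -T`) and `1 + e^{-t}`
(for `t ≥ 0`) satisfying the four conditions (a)–(d) for every `t`. -/
theorem exists_smooth_interpolation :
    ∃ T : ℝ, T > 0 ∧ ∃ f : ℝ → ℝ, ContDiff ℝ (⊤ : ℕ∞) f ∧
      (∀ t ≤ -T, f t = Real.exp (-t)) ∧
      (∀ t ≥ (0 : ℝ), f t = 1 + Real.exp (-t)) ∧
      ∀ t : ℝ,
        f t > 1 ∧
        deriv f t < 0 ∧
        deriv (deriv f) t > 0 ∧
        1 - f t * deriv f t > (1 + deriv f t / f t) ^ 2 := by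
  obtain ⟨T, hT, hs', hs''⟩ := ((eventually_gt_atTop 0).and
    ((slowTransition.eventually_abs_iteratedDeriv_lt one_ne_zero one_pos).and
      (slowTransition.eventually_abs_iteratedDeriv_lt two_ne_zero one_pos))).exists
  refine ⟨T, hT, fun t ↦ Real.exp (-t) + slowTransition T t,
    Real.contDiff_exp.comp contDiff_neg |>.add slowTransition.contDiff,
    fun t ht ↦ by simp [slowTransition.eq_zero_of_le_neg hT ht],
    fun t ht ↦ by simp [slowTransition.eq_one_of_nonneg hT ht, add_comm], fun t ↦ ?_⟩
  have hf : 1 < Real.exp (-t) + slowTransition T t := slowTransition.one_lt_exp_neg_add hT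
  have hnonneg : 0 ≤ slowTransition T t := slowTransition.nonneg
  have hf' := iteratedDeriv_exp_neg_add (slowTransition.contDiff (T := T) (n := 1)) t
  have hf'' := iteratedDeriv_exp_neg_add (slowTransition.contDiff (T := T) (n := 2)) t
  obtain ⟨hlower₁, hupper₁⟩ :=
    abs_lt.1 (slowTransition.abs_iteratedDeriv_lt_exp_neg hT one_ne_zero (hs' t))
  obtain ⟨hlower₂, -⟩ :=
    abs_lt.1 (slowTransition.abs_iteratedDeriv_lt_exp_neg hT two_ne_zero (hs'' t))
  rw [← iteratedDeriv_one, ← iteratedDeriv_succ]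
  exact ⟨hf, by linarith, by linarith,
    sq_one_add_div_lt_one_sub_mul (by linarith) (by linarith) (by linarith)⟩
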